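/- arXiv:2410.09697 — 2 statements merged into one kernel-verified Lean document; each statement's English description precedes it below -/
import Mathlib

section
/- Let m ≥ 10 and a ∈ ( √(2 log 2)/m, 1 ], and let π(x) = (1 − e^{−a²m²/2}) g_m(x) + e^{−a²m²/2} u_m(x), where g_m(x) = (2π)^{−1/2} e^{−(x−m)²/2} and u_m(x) = e^{−d(x,[−m,2m])²/2} / (3m + √(2π)). Then π satisfies a log-Sobolev inequality with constant 81 a² m⁵ / (1 − 2 e^{−a²m²/2}): for every smooth compactly supported f : ℝ → ℝ, ∫ f² log( f² / ∫ f² π dx ) π dx ≤ 2 · (81 a² m⁵ / (1 − 2 e^{−a²m²/2})) · ∫ (f′)² π dx. -/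
open MeasureTheory Real

/-- The density of N(m, 1). -/
noncomputable def gaussAt (m x : ℝ) : ℝ := Real.exp (-(x - m) ^ 2 / 2) / Real.sqrt (2 * Real.pi)

/-- The smoothed uniform density on [−m, 2m]. -/
noncomputable def smUnif (m x : ℝ) : ℝ :=
  Real.exp (-(Metric.infDist x (Set.Icc (-m) (2 * m))) ^ 2 / 2) / (3 * m + Real.sqrt (2 * Real.pi))

/-- The general unimodal target π = (1 − e^{−a²m²/2}) N(m,1) + e^{−a²m²/2} u_m. -/
noncomputable def piDensA (m a x : ℝ) : ℝ :=
  (1 - Real.exp (-(a ^ 2 * m ^ 2) / 2)) * gaussAt m x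
    + Real.exp (-(a ^ 2 * m ^ 2) / 2) * smUnif m x

/-!
Let `p` be a probability density with `(x - c) p'(x) ≤ -δ(x)² p(x)`, where `|x - c| ≤ r + δ(x)`,
and put `g = f - f(c)`, `E = ∫ g'² p`. Then `p` is monotone towards `c`, so the Cauchy–Schwarz
inequality gives `g² p ≤ |x - c| E` pointwise. Integrating the derivative of `(x - c) g² p` yields
`∫ δ² g² p ≤ 4 ∫ g² p + (4 + 2 r²) E`; since the pointwise bound controls `∫ g² p` where
`|x - c| ≤ r + 3` and `δ ≥ 3` elsewhere, both `∫ g² p` and `∫ δ² g² p` are at most a multiple of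
`E`. If moreover `p` is bounded below by a multiple of `exp (-δ² / 2)`, the pointwise bound reads
`log (g² / E) ≤ const + δ²`. The entropy of `f²` is at most that of `f²` relative to the constant
`f(c)² + const * E` in place of the mean, whose integrand is quadratic in `g` where `f²` is not
large and at most a multiple of `(1 + δ²) g²` elsewhere.

Both components of the target satisfy the differential inequality with `c = m` and
`δ(x) = d(x, [-m, 2m])`, and the inequality is stable under mixtures.
-/

open MeasureTheory Real Set Filter InformationTheory
open scoped Interval

section Entropy

variable {α : Type*} [MeasurableSpace α] {μ : Measure α}

theorem klFun_le_sq_sub_one {x : ℝ} (hx : 0 ≤ x) : klFun x ≤ (x - 1) ^ 2 := by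
  have hlog : x * log x ≤ x * (x - 1) := by
    rcases hx.eq_or_lt with rfl | hx
    · simp
    · exact mul_le_mul_of_nonneg_left (log_le_sub_one_of_pos hx) hx.le
  rw [klFun_apply]
  linarith

theorem mul_klFun_div {x t : ℝ} (ht : t ≠ 0) :
    t * klFun (x / t) = x * log (x / t) + t - x := by
  rw [klFun_apply]
  field_simp

theorem integral_mul_log_div_integral_le [IsProbabilityMeasure μ] {h : α → ℝ} {t : ℝ}
    (ht : 0 < t) (h_nonneg : ∀ x, 0 ≤ h x) (h_int : Integrable h μ)
    (hkl : Integrable (fun x ↦ t * klFun (h x / t)) μ) :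
    Integrable (fun x ↦ h x * log (h x / ∫ y, h y ∂μ)) μ ∧
      ∫ x, h x * log (h x / ∫ y, h y ∂μ) ∂μ ≤ ∫ x, t * klFun (h x / t) ∂μ := by
  set M := ∫ y, h y ∂μ with hM
  have M_nonneg : 0 ≤ M := integral_nonneg h_nonneg
  rcases M_nonneg.eq_or_lt with hM0 | hM0
  · have hkl_nonneg : 0 ≤ ∫ x, t * klFun (h x / t) ∂μ := integral_nonneg fun x ↦
      mul_nonneg ht.le (klFun_nonneg (div_nonneg (h_nonneg x) ht.le))
    simpa [← hM0] using hkl_nonneg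
  have change_mean (x : α) :
      h x * log (h x / M) = t * klFun (h x / t) + (1 + log (t / M)) * h x - t := by
    rw [mul_klFun_div ht.ne']
    rcases (h_nonneg x).eq_or_lt with hx | hx
    · simp [← hx]
    · rw [log_div hx.ne' hM0.ne', log_div hx.ne' ht.ne', log_div ht.ne' hM0.ne']
      ring
  have h_int' : Integrable (fun x ↦ (1 + log (t / M)) * h x) μ := h_int.const_mul _
  have sum_int : Integrable (fun x ↦ t * klFun (h x / t) + (1 + log (t / M)) * h x) μ :=
    hkl.add h_int'
  have hlog : log (t / M) * M ≤ t - M :=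
    calc log (t / M) * M ≤ (t / M - 1) * M := by
          gcongr
          exact log_le_sub_one_of_pos (div_pos ht hM0)
      _ = t - M := by field_simp
  simp_rw [change_mean]
  refine ⟨sum_int.sub (integrable_const t), ?_⟩
  rw [integral_sub sum_int (integrable_const t), integral_add hkl h_int',
    integral_const_mul (1 + log (t / M)), ← hM]
  simp only [integral_const, probReal_univ, one_smul]
  linarith

theorem mul_klFun_sq_div_le {y k T w : ℝ} (hT : 0 < T) (hw : 0 ≤ w)
    (hy : 4 * (y - k) ^ 2 ≤ T * exp w) :
    (k ^ 2 + T) * klFun (y ^ 2 / (k ^ 2 + T)) ≤ 3 * T + (15 + 4 * w) * (y - k) ^ 2 := by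
  set t := k ^ 2 + T with ht_def
  set g := y - k with hg
  have ht : 0 < t := by positivity
  rcases le_total (g ^ 2) t with hgt | hgt
  · have key : (y ^ 2 - t) ^ 2 ≤ t * (3 * T + 15 * g ^ 2) := by
      have hsplit : y ^ 2 - t = 2 * k * g + g ^ 2 - T := by simp only [hg, ht_def]; ring
      have h₁ : k ^ 2 * g ^ 2 ≤ t * g ^ 2 := by gcongr; linarith
      have h₂ : g ^ 2 * g ^ 2 ≤ t * g ^ 2 := by gcongr
      have h₃ : T * T ≤ t * T := by gcongr; linarith [sq_nonneg k]
      calc (y ^ 2 - t) ^ 2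
          ≤ 3 * ((2 * k * g) ^ 2 + (g ^ 2) ^ 2 + T ^ 2) := by
            rw [hsplit]
            nlinarith [sq_nonneg (2 * k * g - g ^ 2), sq_nonneg (2 * k * g + T),
              sq_nonneg (g ^ 2 + T)]
        _ ≤ t * (3 * T + 15 * g ^ 2) := by linarith
    calc t * klFun (y ^ 2 / t) ≤ t * (y ^ 2 / t - 1) ^ 2 := by
          gcongr
          exact klFun_le_sq_sub_one (by positivity)
      _ = (y ^ 2 - t) ^ 2 / t := by field_simp
      _ ≤ 3 * T + 15 * g ^ 2 := by rwa [div_le_iff₀' ht]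
      _ ≤ 3 * T + (15 + 4 * w) * g ^ 2 := by gcongr; linarith
  · have hy4 : y ^ 2 ≤ 4 * g ^ 2 := by
      simp only [hg, ht_def] at hgt ⊢
      nlinarith [sq_nonneg (y - 2 * k)]
    have hlog : y ^ 2 * log (y ^ 2 / t) ≤ 4 * g ^ 2 * w := by
      rcases eq_or_ne y 0 with rfl | hy0
      · simpa using by positivity
      have : log (y ^ 2 / t) ≤ w := by
        rw [log_le_iff_le_exp (by positivity), div_le_iff₀' ht]
        calc y ^ 2 ≤ T * exp w := hy4.trans hy
          _ ≤ t * exp w := by gcongr; linarith [sq_nonneg k]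
      calc y ^ 2 * log (y ^ 2 / t) ≤ y ^ 2 * w := by gcongr
        _ ≤ 4 * g ^ 2 * w := by gcongr
    rw [mul_klFun_div ht.ne']
    nlinarith [sq_nonneg y, sq_nonneg g]

theorem integral_sq_mul_log_div_le [IsProbabilityMeasure μ] {f w : α → ℝ} {k T : ℝ}
    (hT : 0 < T) (hf : AEStronglyMeasurable f μ) (hw : ∀ x, 0 ≤ w x)
    (hfw : ∀ x, 4 * (f x - k) ^ 2 ≤ T * exp (w x))
    (hg : Integrable (fun x ↦ (f x - k) ^ 2) μ)
    (hgw : Integrable (fun x ↦ w x * (f x - k) ^ 2) μ) :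
    Integrable (fun x ↦ f x ^ 2) μ ∧
    Integrable (fun x ↦ f x ^ 2 * log (f x ^ 2 / ∫ y, f y ^ 2 ∂μ)) μ ∧
      ∫ x, f x ^ 2 * log (f x ^ 2 / ∫ y, f y ^ 2 ∂μ) ∂μ ≤
        3 * T + 15 * ∫ x, (f x - k) ^ 2 ∂μ + 4 * ∫ x, w x * (f x - k) ^ 2 ∂μ := by
  have hf2 : Integrable (fun x ↦ f x ^ 2) μ := by
    have hL2 : MemLp (fun x ↦ f x - k) 2 μ :=
      (memLp_two_iff_integrable_sq (hf.sub aestronglyMeasurable_const)).2 hg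
    simpa using (hL2.add (memLp_const k)).integrable_sq
  have affine_int : Integrable (fun x ↦ 3 * T + 15 * (f x - k) ^ 2) μ :=
    (integrable_const _).add (hg.const_mul _)
  have bound_int : Integrable (fun x ↦ 3 * T + 15 * (f x - k) ^ 2 + 4 * (w x * (f x - k) ^ 2)) μ :=
    affine_int.add (hgw.const_mul _)
  have kl_le (x : α) : (k ^ 2 + T) * klFun (f x ^ 2 / (k ^ 2 + T)) ≤
      3 * T + 15 * (f x - k) ^ 2 + 4 * (w x * (f x - k) ^ 2) := by
    linarith [mul_klFun_sq_div_le hT (hw x) (hfw x)]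
  have kl_int : Integrable (fun x ↦ (k ^ 2 + T) * klFun (f x ^ 2 / (k ^ 2 + T))) μ := by
    refine bound_int.mono' ?_ (ae_of_all _ fun x ↦ ?_)
    · exact (continuous_klFun.comp_aestronglyMeasurable
        ((hf.pow 2).mul aestronglyMeasurable_const)).const_mul _
    · rw [norm_of_nonneg (mul_nonneg (by positivity) (klFun_nonneg (by positivity)))]
      exact kl_le x
  obtain ⟨ent_int, ent_le⟩ := integral_mul_log_div_integral_le
    (by positivity : 0 < k ^ 2 + T) (fun x ↦ sq_nonneg (f x)) hf2 kl_int
  refine ⟨hf2, ent_int, ent_le.trans ((integral_mono kl_int bound_int kl_le).trans_eq ?_)⟩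
  rw [integral_add affine_int (hgw.const_mul _),
    integral_add (integrable_const _) (hg.const_mul _)]
  simp [integral_const_mul]

end Entropy

section Interval

theorem sq_intervalIntegral_le {u : ℝ → ℝ} (hu : Continuous u) (a b : ℝ) :
    (∫ y in a..b, u y) ^ 2 ≤ |b - a| * ∫ y in Ι a b, u y ^ 2 := by
  have u_int : IntegrableOn u (Ι a b) := intervalIntegrable_iff.1 (hu.intervalIntegrable a b)
  have u_sq_int : IntegrableOn (fun y ↦ u y ^ 2) (Ι a b) :=
    intervalIntegrable_iff.1 ((hu.pow 2).intervalIntegrable a b)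
  rw [← sq_abs, ← norm_eq_abs, intervalIntegral.norm_integral_eq_norm_integral_uIoc, norm_eq_abs,
    sq_abs]
  rcases eq_or_ne a b with rfl | hab
  · simp
  have hlen : 0 < |b - a| := abs_pos.2 (sub_ne_zero.2 hab.symm)
  have hvol : volume.real (Ι a b) = |b - a| := by simp [measureReal_def]
  have jensen : (⨍ y in Ι a b, u y) ^ 2 ≤ ⨍ y in Ι a b, u y ^ 2 :=
    (even_two.convexOn_pow (𝕜 := ℝ)).map_set_average_le (continuousOn_pow 2) isClosed_univ
      (by simpa [sub_eq_zero] using hab.symm) (by simp) (by simp) u_int u_sq_int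
  rw [setAverage_eq, setAverage_eq, hvol, smul_eq_mul, smul_eq_mul, mul_pow, inv_pow,
    inv_mul_le_iff₀ (pow_pos hlen 2)] at jensen
  exact jensen.trans_eq (by field_simp)

theorem integral_le_of_forall_intervalIntegral_le {F : ℝ → ℝ} {c K : ℝ} (hF : Continuous F)
    (hF_nonneg : ∀ x, 0 ≤ F x) (hK : ∀ ρ, 0 ≤ ρ → ∫ x in (c - ρ)..(c + ρ), F x ≤ K) :
    Integrable F ∧ ∫ x, F x ≤ K := by
  have left_tendsto : Tendsto (fun ρ : ℝ ↦ c - ρ) atTop atBot :=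
    tendsto_atBot_add_const_left _ _ tendsto_neg_atTop_atBot
  have right_tendsto : Tendsto (fun ρ : ℝ ↦ c + ρ) atTop atTop :=
    tendsto_atTop_add_const_left _ _ tendsto_id
  have hK' : ∀ᶠ ρ in atTop, ∫ x in (c - ρ)..(c + ρ), F x ≤ K :=
    (eventually_ge_atTop 0).mono hK
  have F_int : Integrable F :=
    integrable_of_intervalIntegral_norm_bounded K (fun _ ↦ hF.integrableOn_Ioc) left_tendsto
      right_tendsto (by simpa only [norm_of_nonneg (hF_nonneg _)] using hK')
  exact ⟨F_int, le_of_tendsto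
    (intervalIntegral_tendsto_integral F_int left_tendsto right_tendsto) hK'⟩

end Interval

/-- A differentiable nonnegative function `p` with `(x - c) p'(x) ≤ -δ(x)² p(x)`. Equality holds
for the Gaussian of mean `c` and variance `1` with `δ(x) = x - c`; in general `p` is monotone
towards the mode `c` and decays at least like a Gaussian whose effective distance to `c` is `δ`. -/
structure IsGaussianUnimodal (p : ℝ → ℝ) (c : ℝ) (δ : ℝ → ℝ) : Prop where
  differentiable : Differentiable ℝ p
  nonneg : ∀ x, 0 ≤ p x
  sub_mul_deriv_le : ∀ x, (x - c) * deriv p x ≤ -(δ x ^ 2 * p x)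

namespace IsGaussianUnimodal

variable {p q δ g : ℝ → ℝ} {c r x : ℝ}

theorem const_mul (hp : IsGaussianUnimodal p c δ) {k : ℝ} (hk : 0 ≤ k) :
    IsGaussianUnimodal (fun x ↦ k * p x) c δ where
  differentiable := hp.differentiable.const_mul k
  nonneg x := mul_nonneg hk (hp.nonneg x)
  sub_mul_deriv_le x := by
    rw [deriv_const_mul _ (hp.differentiable x)]
    linarith [mul_le_mul_of_nonneg_left (hp.sub_mul_deriv_le x) hk]

theorem add (hp : IsGaussianUnimodal p c δ) (hq : IsGaussianUnimodal q c δ) :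
    IsGaussianUnimodal (fun x ↦ p x + q x) c δ where
  differentiable := hp.differentiable.add hq.differentiable
  nonneg x := add_nonneg (hp.nonneg x) (hq.nonneg x)
  sub_mul_deriv_le x := by
    rw [deriv_fun_add (hp.differentiable x) (hq.differentiable x)]
    linarith [hp.sub_mul_deriv_le x, hq.sub_mul_deriv_le x]

theorem mono (hp : IsGaussianUnimodal p c δ) {δ' : ℝ → ℝ} (h : ∀ x, δ' x ^ 2 ≤ δ x ^ 2) :
    IsGaussianUnimodal p c δ' where
  differentiable := hp.differentiable
  nonneg := hp.nonneg
  sub_mul_deriv_le x := (hp.sub_mul_deriv_le x).trans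
    (neg_le_neg (mul_le_mul_of_nonneg_right (h x) (hp.nonneg x)))

theorem sub_mul_deriv_nonpos (hp : IsGaussianUnimodal p c δ) (x : ℝ) :
    (x - c) * deriv p x ≤ 0 :=
  (hp.sub_mul_deriv_le x).trans
    (neg_nonpos.2 (mul_nonneg (sq_nonneg _) (hp.nonneg x)))

theorem antitoneOn_Ici (hp : IsGaussianUnimodal p c δ) : AntitoneOn p (Ici c) := by
  refine antitoneOn_of_deriv_nonpos (convex_Ici c) hp.differentiable.continuous.continuousOn
    hp.differentiable.differentiableOn fun x hx ↦ ?_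
  rw [interior_Ici] at hx
  exact nonpos_of_mul_nonpos_right (hp.sub_mul_deriv_nonpos x) (sub_pos.2 hx)

theorem monotoneOn_Iic (hp : IsGaussianUnimodal p c δ) : MonotoneOn p (Iic c) := by
  refine monotoneOn_of_deriv_nonneg (convex_Iic c) hp.differentiable.continuous.continuousOn
    hp.differentiable.differentiableOn fun x hx ↦ ?_
  rw [interior_Iic] at hx
  exact nonneg_of_mul_nonpos_right (hp.sub_mul_deriv_nonpos x) (sub_neg.2 hx)

theorem le_of_mem_uIcc (hp : IsGaussianUnimodal p c δ) {y : ℝ} (hy : y ∈ uIcc c x) :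
    p x ≤ p y := by
  rcases mem_uIcc.1 hy with ⟨hcy, hyx⟩ | ⟨hxy, hyc⟩
  · exact hp.antitoneOn_Ici hcy (hcy.trans hyx) hyx
  · exact hp.monotoneOn_Iic (hxy.trans hyc) hyc hxy

theorem sq_mul_le (hp : IsGaussianUnimodal p c δ) (hg : ContDiff ℝ 1 g) (hgc : g c = 0)
    (hE : Integrable fun x ↦ deriv g x ^ 2 * p x) (x : ℝ) :
    g x ^ 2 * p x ≤ |x - c| * ∫ y, deriv g y ^ 2 * p y := by
  have hg' : Continuous (deriv g) := hg.continuous_deriv le_rfl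
  have hgx : g x = ∫ y in c..x, deriv g y := by
    rw [intervalIntegral.integral_deriv_eq_sub (fun y _ ↦ hg.differentiable one_ne_zero y)
      (hg'.intervalIntegrable c x), hgc, sub_zero]
  calc g x ^ 2 * p x ≤ |x - c| * (∫ y in Ι c x, deriv g y ^ 2) * p x := by
        rw [hgx]
        exact mul_le_mul_of_nonneg_right (sq_intervalIntegral_le hg' c x) (hp.nonneg x)
    _ = |x - c| * ∫ y in Ι c x, deriv g y ^ 2 * p x := by rw [integral_mul_const, mul_assoc]
    _ ≤ |x - c| * ∫ y in Ι c x, deriv g y ^ 2 * p y := by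
        refine mul_le_mul_of_nonneg_left (setIntegral_mono_on ?_ hE.integrableOn
          measurableSet_uIoc fun y hy ↦ ?_) (abs_nonneg _)
        · exact (intervalIntegrable_iff.1 ((hg'.pow 2).intervalIntegrable c x)).mul_const _
        · exact mul_le_mul_of_nonneg_left (hp.le_of_mem_uIcc (uIoc_subset_uIcc hy)) (sq_nonneg _)
    _ ≤ |x - c| * ∫ y, deriv g y ^ 2 * p y :=
        mul_le_mul_of_nonneg_left (setIntegral_le_integral hE
          (ae_of_all _ fun y ↦ mul_nonneg (sq_nonneg _) (hp.nonneg y))) (abs_nonneg _)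

theorem deriv_sub_mul_sq_mul_le (hp : IsGaussianUnimodal p c δ) (hcδ : |x - c| ≤ r + δ x)
    (hg : DifferentiableAt ℝ g x) :
    2 * deriv (fun y ↦ (y - c) * (g y ^ 2 * p y)) x ≤
      4 * (g x ^ 2 * p x) + (4 + 2 * r ^ 2) * (deriv g x ^ 2 * p x)
        - δ x ^ 2 * (g x ^ 2 * p x) := by
  have hderiv : deriv (fun y ↦ (y - c) * (g y ^ 2 * p y)) x =
      g x ^ 2 * p x + (x - c) * (2 * g x * deriv g x * p x + g x ^ 2 * deriv p x) := by
    have hgp := (hg.hasDerivAt.fun_pow 2).fun_mul (hp.differentiable x).hasDerivAt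
    rw [(((hasDerivAt_id' x).sub_const c).fun_mul hgp).deriv]
    ring
  have young : 4 * (g x * deriv g x * (x - c)) ≤
      2 * g x ^ 2 + (4 + 2 * r ^ 2) * deriv g x ^ 2 + δ x ^ 2 * g x ^ 2 :=
    calc 4 * (g x * deriv g x * (x - c)) ≤ 4 * (|g x| * |deriv g x| * |x - c|) := by
          rw [← abs_mul, ← abs_mul]
          gcongr
          exact le_abs_self _
      _ ≤ 4 * (|g x| * |deriv g x| * (r + δ x)) := by gcongr
      _ ≤ 2 * |g x| ^ 2 + (4 + 2 * r ^ 2) * |deriv g x| ^ 2 + δ x ^ 2 * |g x| ^ 2 := by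
          linarith [sq_nonneg (|g x| - r * |deriv g x|), sq_nonneg (δ x * |g x| - 2 * |deriv g x|)]
      _ = _ := by simp only [sq_abs]
  rw [hderiv]
  linarith [mul_le_mul_of_nonneg_left (hp.sub_mul_deriv_le x) (sq_nonneg (g x)),
    mul_le_mul_of_nonneg_right young (hp.nonneg x)]

-- Integrate the derivative of `(x - c) g² p`: on intervals centred at `c` the boundary terms have
-- a sign, so no behaviour at infinity is needed.
theorem intervalIntegral_sq_mul_sq_mul_le (hp : IsGaussianUnimodal p c δ) (hδ : Continuous δ)
    (hcδ : ∀ x, |x - c| ≤ r + δ x) (hg : ContDiff ℝ 1 g) {ρ : ℝ} (hρ : 0 ≤ ρ) :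
    ∫ x in (c - ρ)..(c + ρ), δ x ^ 2 * (g x ^ 2 * p x) ≤
      4 * (∫ x in (c - ρ)..(c + ρ), g x ^ 2 * p x) +
        (4 + 2 * r ^ 2) * ∫ x in (c - ρ)..(c + ρ), deriv g x ^ 2 * p x := by
  have hp_cont := hp.differentiable.continuous
  have hg_cont := hg.continuous
  have : Continuous (deriv g) := hg.continuous_deriv le_rfl
  have hg_diff : Differentiable ℝ g := hg.differentiable one_ne_zero
  have hderiv (x : ℝ) : HasDerivAt (fun y ↦ 2 * ((y - c) * (g y ^ 2 * p y)))
      (2 * deriv (fun y ↦ (y - c) * (g y ^ 2 * p y)) x) x := by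
    have : Differentiable ℝ fun y ↦ (y - c) * (g y ^ 2 * p y) := by
      have := hp.differentiable
      fun_prop
    exact (this x).hasDerivAt.const_mul 2
  have boundary := intervalIntegral.sub_le_integral_of_hasDeriv_right_of_le
    (by linarith : c - ρ ≤ c + ρ) (fun x _ ↦ (hderiv x).continuousAt.continuousWithinAt)
    (fun x _ ↦ (hderiv x).hasDerivWithinAt) (Continuous.integrableOn_Icc (by fun_prop))
    (fun x _ ↦ hp.deriv_sub_mul_sq_mul_le (hcδ x) (hg_diff x))
  have left_nonneg := mul_nonneg hρ (mul_nonneg (sq_nonneg (g (c - ρ))) (hp.nonneg (c - ρ)))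
  have right_nonneg := mul_nonneg hρ (mul_nonneg (sq_nonneg (g (c + ρ))) (hp.nonneg (c + ρ)))
  have hint {F : ℝ → ℝ} (hF : Continuous F) : IntervalIntegrable F volume (c - ρ) (c + ρ) :=
    hF.intervalIntegrable _ _
  rw [intervalIntegral.integral_sub (hint (by fun_prop)) (hint (by fun_prop)),
    intervalIntegral.integral_add (hint (by fun_prop)) (hint (by fun_prop)),
    intervalIntegral.integral_const_mul, intervalIntegral.integral_const_mul] at boundary
  linarith

theorem sq_mul_le_indicator_add (hp : IsGaussianUnimodal p c δ)
    (hcδ : ∀ x, |x - c| ≤ r + δ x) (hg : ContDiff ℝ 1 g) (hgc : g c = 0)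
    (hE : Integrable fun x ↦ deriv g x ^ 2 * p x) (x : ℝ) :
    g x ^ 2 * p x ≤
      (Metric.closedBall c (r + 3)).indicator (fun _ ↦ (r + 3) * ∫ y, deriv g y ^ 2 * p y) x +
        δ x ^ 2 * (g x ^ 2 * p x) / 9 := by
  have hE_nonneg : 0 ≤ ∫ y, deriv g y ^ 2 * p y :=
    integral_nonneg fun y ↦ mul_nonneg (sq_nonneg _) (hp.nonneg y)
  have hgp : 0 ≤ g x ^ 2 * p x := mul_nonneg (sq_nonneg _) (hp.nonneg x)
  by_cases hx : |x - c| ≤ r + 3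
  · rw [indicator_of_mem (by simpa [Real.dist_eq] using hx)]
    calc g x ^ 2 * p x ≤ |x - c| * ∫ y, deriv g y ^ 2 * p y := hp.sq_mul_le hg hgc hE x
      _ ≤ (r + 3) * ∫ y, deriv g y ^ 2 * p y := by gcongr
      _ ≤ _ := le_add_of_nonneg_right (by positivity)
  · rw [indicator_of_notMem (by simpa [Real.dist_eq] using hx)]
    have hδx : 3 ≤ δ x := by linarith [hcδ x]
    have : 3 ^ 2 * (g x ^ 2 * p x) ≤ δ x ^ 2 * (g x ^ 2 * p x) := by gcongr
    linarith

theorem intervalIntegral_sq_mul_le (hp : IsGaussianUnimodal p c δ) (hδ : Continuous δ)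
    (hr : 0 ≤ r) (hcδ : ∀ x, |x - c| ≤ r + δ x) (hg : ContDiff ℝ 1 g) (hgc : g c = 0)
    (hE : Integrable fun x ↦ deriv g x ^ 2 * p x) {ρ : ℝ} (hρ : 0 ≤ ρ) :
    ∫ x in (c - ρ)..(c + ρ), g x ^ 2 * p x ≤
      2 * (r + 3) ^ 2 * (∫ x, deriv g x ^ 2 * p x) +
        (∫ x in (c - ρ)..(c + ρ), δ x ^ 2 * (g x ^ 2 * p x)) / 9 := by
  have hp_cont := hp.differentiable.continuous
  have hg_cont := hg.continuous
  set E := ∫ x, deriv g x ^ 2 * p x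
  have hE_nonneg : 0 ≤ E := integral_nonneg fun x ↦ mul_nonneg (sq_nonneg _) (hp.nonneg x)
  let core : ℝ → ℝ := (Metric.closedBall c (r + 3)).indicator fun _ ↦ (r + 3) * E
  have core_nonneg (x : ℝ) : 0 ≤ core x := indicator_nonneg (fun _ _ ↦ by positivity) x
  have core_int : Integrable core :=
    (integrable_indicator_iff Metric.isClosed_closedBall.measurableSet).2
      (integrableOn_const measure_closedBall_lt_top.ne)
  have core_integral_le : ∫ x in (c - ρ)..(c + ρ), core x ≤ 2 * (r + 3) ^ 2 * E := by
    rw [intervalIntegral.integral_of_le (by linarith)]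
    calc ∫ x in Ioc (c - ρ) (c + ρ), core x ≤ ∫ x, core x :=
          setIntegral_le_integral core_int (ae_of_all _ core_nonneg)
      _ = 2 * (r + 3) ^ 2 * E := by
          rw [integral_indicator Metric.isClosed_closedBall.measurableSet, setIntegral_const,
            Real.volume_real_closedBall (by positivity), smul_eq_mul]
          ring
  have hint {F : ℝ → ℝ} (hF : Continuous F) : IntervalIntegrable F volume (c - ρ) (c + ρ) :=
    hF.intervalIntegrable _ _
  calc ∫ x in (c - ρ)..(c + ρ), g x ^ 2 * p x
      ≤ ∫ x in (c - ρ)..(c + ρ), (core x + δ x ^ 2 * (g x ^ 2 * p x) / 9) :=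
        intervalIntegral.integral_mono_on (by linarith) (hint (by fun_prop))
          (core_int.intervalIntegrable.add (hint (by fun_prop))) fun x _ ↦
            hp.sq_mul_le_indicator_add hcδ hg hgc hE x
    _ ≤ _ := by
        rw [intervalIntegral.integral_add core_int.intervalIntegrable (hint (by fun_prop)),
          intervalIntegral.integral_div]
        gcongr

theorem integral_sq_mul_le (hp : IsGaussianUnimodal p c δ) (hδ : Continuous δ)
    (hr : 0 ≤ r) (hcδ : ∀ x, |x - c| ≤ r + δ x) (hg : ContDiff ℝ 1 g) (hgc : g c = 0)
    (hE : Integrable fun x ↦ deriv g x ^ 2 * p x) :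
    (Integrable (fun x ↦ g x ^ 2 * p x) ∧
      ∫ x, g x ^ 2 * p x ≤ 4 * (r + 3) ^ 2 * ∫ x, deriv g x ^ 2 * p x) ∧
    Integrable (fun x ↦ δ x ^ 2 * (g x ^ 2 * p x)) ∧
      ∫ x, δ x ^ 2 * (g x ^ 2 * p x) ≤ 18 * (r + 3) ^ 2 * ∫ x, deriv g x ^ 2 * p x := by
  have hp_cont := hp.differentiable.continuous
  have hg_cont := hg.continuous
  have energy_nonneg (x : ℝ) : 0 ≤ deriv g x ^ 2 * p x := mul_nonneg (sq_nonneg _) (hp.nonneg x)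
  set E := ∫ x, deriv g x ^ 2 * p x
  have hE_nonneg : 0 ≤ E := integral_nonneg energy_nonneg
  have hrE : (4 + 2 * r ^ 2) * E ≤ 2 * (r + 3) ^ 2 * E := by gcongr; nlinarith
  have weighted (ρ : ℝ) (hρ : 0 ≤ ρ) :
      ∫ x in (c - ρ)..(c + ρ), δ x ^ 2 * (g x ^ 2 * p x) ≤ 18 * (r + 3) ^ 2 * E := by
    have energy_le : ∫ x in (c - ρ)..(c + ρ), deriv g x ^ 2 * p x ≤ E := by
      rw [intervalIntegral.integral_of_le (by linarith)]
      exact setIntegral_le_integral hE (ae_of_all _ energy_nonneg)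
    have := mul_le_mul_of_nonneg_left energy_le (by positivity : 0 ≤ 4 + 2 * r ^ 2)
    linarith [hp.intervalIntegral_sq_mul_sq_mul_le hδ hcδ hg hρ,
      hp.intervalIntegral_sq_mul_le hδ hr hcδ hg hgc hE hρ]
  have unweighted (ρ : ℝ) (hρ : 0 ≤ ρ) :
      ∫ x in (c - ρ)..(c + ρ), g x ^ 2 * p x ≤ 4 * (r + 3) ^ 2 * E := by
    linarith [weighted ρ hρ, hp.intervalIntegral_sq_mul_le hδ hr hcδ hg hgc hE hρ]
  exact ⟨integral_le_of_forall_intervalIntegral_le (by fun_prop)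
      (fun x ↦ mul_nonneg (sq_nonneg _) (hp.nonneg x)) unweighted,
    integral_le_of_forall_intervalIntegral_le (by fun_prop)
      (fun x ↦ mul_nonneg (sq_nonneg _) (mul_nonneg (sq_nonneg _) (hp.nonneg x))) weighted⟩

end IsGaussianUnimodal

section WithDensity

variable {p F : ℝ → ℝ}

theorem integrable_withDensity_ofReal_iff (hp : Measurable p) (hp_nonneg : ∀ x, 0 ≤ p x) :
    Integrable F (volume.withDensity fun x ↦ ENNReal.ofReal (p x)) ↔
      Integrable fun x ↦ F x * p x := by
  rw [integrable_withDensity_iff_integrable_smul' hp.ennreal_ofReal (by simp)]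
  simp_rw [ENNReal.toReal_ofReal (hp_nonneg _), smul_eq_mul, mul_comm]

theorem integral_withDensity_ofReal (hp : Measurable p) (hp_nonneg : ∀ x, 0 ≤ p x) :
    ∫ x, F x ∂volume.withDensity (fun x ↦ ENNReal.ofReal (p x)) = ∫ x, F x * p x := by
  rw [integral_withDensity_eq_integral_toReal_smul hp.ennreal_ofReal (by simp)]
  simp_rw [ENNReal.toReal_ofReal (hp_nonneg _), smul_eq_mul, mul_comm]

theorem isProbabilityMeasure_withDensity_ofReal (hp_nonneg : ∀ x, 0 ≤ p x)
    (hp_one : ∫ x, p x = 1) :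
    IsProbabilityMeasure (volume.withDensity fun x ↦ ENNReal.ofReal (p x)) := by
  have hp_int : Integrable p := .of_integral_ne_zero (by simp [hp_one])
  refine ⟨?_⟩
  rw [withDensity_apply _ .univ, setLIntegral_univ,
    ← ofReal_integral_eq_lintegral_ofReal hp_int (ae_of_all _ hp_nonneg), hp_one,
    ENNReal.ofReal_one]

end WithDensity

/-- The log-Sobolev inequality with constant `C` for the density `q`, for every `C¹` function of
finite energy. The integrability of `f²` and of the entropy integrand is part of the conclusion,
as the Bochner integral of a non-integrable function is `0`. -/
def SatisfiesLogSobolev (q : ℝ → ℝ) (C : ℝ) : Prop :=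
  ∀ f : ℝ → ℝ, ContDiff ℝ 1 f → Integrable (fun x ↦ deriv f x ^ 2 * q x) →
    Integrable (fun x ↦ f x ^ 2 * q x) ∧
    Integrable (fun x ↦ f x ^ 2 * log (f x ^ 2 / ∫ y, f y ^ 2 * q y) * q x) ∧
      ∫ x, f x ^ 2 * log (f x ^ 2 / ∫ y, f y ^ 2 * q y) * q x ≤
        2 * C * ∫ x, deriv f x ^ 2 * q x

namespace SatisfiesLogSobolev

variable {q : ℝ → ℝ} {C C' : ℝ}

theorem mono (h : SatisfiesLogSobolev q C) (hq : ∀ x, 0 ≤ q x) (hC : C ≤ C') :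
    SatisfiesLogSobolev q C' := by
  intro f hf hE
  obtain ⟨f_sq_int, ent_int, ent_le⟩ := h f hf hE
  have : 0 ≤ ∫ x, deriv f x ^ 2 * q x := integral_nonneg fun x ↦ mul_nonneg (sq_nonneg _) (hq x)
  exact ⟨f_sq_int, ent_int, ent_le.trans (by gcongr)⟩

theorem entropy_le_of_hasCompactSupport (h : SatisfiesLogSobolev q C) (hq : Continuous q)
    {f : ℝ → ℝ} (hf : ContDiff ℝ 1 f) (hf_supp : HasCompactSupport f) :
    ∫ x, f x ^ 2 * log (f x ^ 2 / ∫ y, f y ^ 2 * q y) * q x ≤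
      2 * C * ∫ x, deriv f x ^ 2 * q x := by
  have hf' : Continuous (deriv f) := hf.continuous_deriv le_rfl
  have energy_supp : HasCompactSupport fun x ↦ deriv f x ^ 2 * q x :=
    (hf_supp.deriv.comp_left (zero_pow two_ne_zero)).mul_right
  exact (h f hf ((hf'.pow 2).mul hq |>.integrable_of_hasCompactSupport energy_supp)).2.2

end SatisfiesLogSobolev

theorem four_mul_add_le_mul_exp {r : ℝ} (hr : 0 ≤ r) (t : ℝ) :
    4 * (r + t) ≤ (r + 3) * exp (2 + t ^ 2 / 2) := by
  have exp_two : 7 ≤ exp 2 := by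
    have := exp_one_gt_d9
    rw [show (2 : ℝ) = 1 + 1 by norm_num, exp_add]
    nlinarith
  calc 4 * (r + t) ≤ (r + 3) * (7 * (t ^ 2 / 2 + 1)) := by
        nlinarith [sq_nonneg (t - 1), mul_nonneg hr (sq_nonneg t)]
    _ ≤ (r + 3) * (exp 2 * exp (t ^ 2 / 2)) := by
        gcongr
        exact add_one_le_exp _
    _ = (r + 3) * exp (2 + t ^ 2 / 2) := by rw [exp_add]

namespace IsGaussianUnimodal

variable {p δ f g : ℝ → ℝ} {c r u η : ℝ}

theorem four_mul_sq_le_mul_exp (hp : IsGaussianUnimodal p c δ) (hr : 0 ≤ r)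
    (hcδ : ∀ x, |x - c| ≤ r + δ x) (hlow : ∀ x, exp (-δ x ^ 2 / 2) ≤ (r + 3) * exp u * p x)
    (hg : ContDiff ℝ 1 g) (hgc : g c = 0) (hE : Integrable fun x ↦ deriv g x ^ 2 * p x)
    (hη : ∫ x, deriv g x ^ 2 * p x ≤ η) (x : ℝ) :
    4 * g x ^ 2 ≤ (r + 3) ^ 2 * η * exp (u + 2 + δ x ^ 2) := by
  have hη_nonneg : 0 ≤ η :=
    (integral_nonneg fun x ↦ mul_nonneg (sq_nonneg _) (hp.nonneg x)).trans hη
  have pointwise : g x ^ 2 * p x ≤ (r + δ x) * η :=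
    (hp.sq_mul_le hg hgc hE x).trans (mul_le_mul (hcδ x) hη
      (integral_nonneg fun y ↦ mul_nonneg (sq_nonneg _) (hp.nonneg y))
      ((abs_nonneg _).trans (hcδ x)))
  calc 4 * g x ^ 2 = 4 * g x ^ 2 * exp (-δ x ^ 2 / 2) * exp (δ x ^ 2 / 2) := by
        rw [mul_assoc _ (exp _), ← exp_add]
        ring_nf
        simp
    _ ≤ 4 * g x ^ 2 * ((r + 3) * exp u * p x) * exp (δ x ^ 2 / 2) := by
        gcongr
        exact hlow x
    _ = 4 * ((r + 3) * exp u) * (g x ^ 2 * p x) * exp (δ x ^ 2 / 2) := by ring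
    _ ≤ 4 * ((r + 3) * exp u) * ((r + δ x) * η) * exp (δ x ^ 2 / 2) := by gcongr
    _ = (r + 3) * exp u * η * exp (δ x ^ 2 / 2) * (4 * (r + δ x)) := by ring
    _ ≤ (r + 3) * exp u * η * exp (δ x ^ 2 / 2) * ((r + 3) * exp (2 + δ x ^ 2 / 2)) :=
        mul_le_mul_of_nonneg_left (four_mul_add_le_mul_exp hr (δ x)) (by positivity)
    _ = (r + 3) ^ 2 * η * (exp u * exp (δ x ^ 2 / 2) * exp (2 + δ x ^ 2 / 2)) := by ring
    _ = (r + 3) ^ 2 * η * exp (u + 2 + δ x ^ 2) := by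
        rw [← exp_add, ← exp_add]
        ring_nf

theorem entropy_le (hp : IsGaussianUnimodal p c δ) (hδ : Continuous δ) (hr : 0 ≤ r)
    (hcδ : ∀ x, |x - c| ≤ r + δ x) (hu : 0 ≤ u)
    (hlow : ∀ x, exp (-δ x ^ 2 / 2) ≤ (r + 3) * exp u * p x) (hp_one : ∫ x, p x = 1)
    (hf : ContDiff ℝ 1 f) (hE : Integrable fun x ↦ deriv f x ^ 2 * p x) (hη_pos : 0 < η)
    (hη : ∫ x, deriv f x ^ 2 * p x ≤ η) :
    Integrable (fun x ↦ f x ^ 2 * p x) ∧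
    Integrable (fun x ↦ f x ^ 2 * log (f x ^ 2 / ∫ y, f y ^ 2 * p y) * p x) ∧
      ∫ x, f x ^ 2 * log (f x ^ 2 / ∫ y, f y ^ 2 * p y) * p x ≤
        (r + 3) ^ 2 * (168 + 16 * u) * η := by
  let g (x : ℝ) : ℝ := f x - f c
  have hg : ContDiff ℝ 1 g := hf.sub contDiff_const
  have hg_deriv : deriv g = deriv f := funext fun x ↦ deriv_sub_const _
  rw [← hg_deriv] at hE hη
  obtain ⟨⟨g_sq_int, g_sq_le⟩, δ_sq_int, δ_sq_le⟩ :=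
    hp.integral_sq_mul_le hδ hr hcδ hg (sub_self _) hE
  have hp_meas : Measurable p := hp.differentiable.continuous.measurable
  have := isProbabilityMeasure_withDensity_ofReal hp.nonneg hp_one
  have weight_mul (x : ℝ) : (u + 2 + δ x ^ 2) * g x ^ 2 * p x =
      (u + 2) * (g x ^ 2 * p x) + δ x ^ 2 * (g x ^ 2 * p x) := by ring
  have weighted_int : Integrable fun x ↦ (u + 2 + δ x ^ 2) * g x ^ 2 * p x := by
    simp_rw [weight_mul]
    exact (g_sq_int.const_mul _).add δ_sq_int
  have weighted_le : ∫ x, (u + 2 + δ x ^ 2) * g x ^ 2 * p x ≤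
      (r + 3) ^ 2 * (26 + 4 * u) * ∫ x, deriv g x ^ 2 * p x := by
    simp_rw [weight_mul]
    rw [integral_add (g_sq_int.const_mul _) δ_sq_int, integral_const_mul]
    linarith [mul_le_mul_of_nonneg_left g_sq_le (by positivity : 0 ≤ u + 2)]
  have entropy := integral_sq_mul_log_div_le (μ := volume.withDensity fun x ↦ ENNReal.ofReal (p x))
    (w := fun x ↦ u + 2 + δ x ^ 2) (k := f c) (T := (r + 3) ^ 2 * η) (by positivity)
    hf.continuous.aestronglyMeasurable (fun x ↦ by positivity)
    (hp.four_mul_sq_le_mul_exp hr hcδ hlow hg (sub_self _) hE hη)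
    ((integrable_withDensity_ofReal_iff hp_meas hp.nonneg).2 g_sq_int)
    ((integrable_withDensity_ofReal_iff hp_meas hp.nonneg).2 weighted_int)
  simp only [integrable_withDensity_ofReal_iff hp_meas hp.nonneg,
    integral_withDensity_ofReal hp_meas hp.nonneg] at entropy
  have total_le : 3 * ((r + 3) ^ 2 * η) + 15 * (∫ x, g x ^ 2 * p x) +
      4 * (∫ x, (u + 2 + δ x ^ 2) * g x ^ 2 * p x) ≤ (r + 3) ^ 2 * (168 + 16 * u) * η := by
    have := mul_le_mul_of_nonneg_left hη (by positivity : 0 ≤ (r + 3) ^ 2 * (164 + 16 * u))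
    linarith [(by positivity : 0 ≤ (r + 3) ^ 2 * η)]
  exact ⟨entropy.1, entropy.2.1, entropy.2.2.trans total_le⟩

theorem satisfiesLogSobolev (hp : IsGaussianUnimodal p c δ) (hδ : Continuous δ) (hr : 0 ≤ r)
    (hcδ : ∀ x, |x - c| ≤ r + δ x) (hu : 0 ≤ u)
    (hlow : ∀ x, exp (-δ x ^ 2 / 2) ≤ (r + 3) * exp u * p x) (hp_one : ∫ x, p x = 1) :
    SatisfiesLogSobolev p ((r + 3) ^ 2 * (84 + 8 * u)) := by
  intro f hf hE
  have hE_nonneg : 0 ≤ ∫ x, deriv f x ^ 2 * p x :=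
    integral_nonneg fun x ↦ mul_nonneg (sq_nonneg _) (hp.nonneg x)
  have entropy {ε : ℝ} (hε : 0 < ε) := hp.entropy_le hδ hr hcδ hu hlow hp_one hf hE
    (add_pos_of_nonneg_of_pos hE_nonneg hε) (le_add_of_nonneg_right hε.le)
  refine ⟨(entropy one_pos).1, (entropy one_pos).2.1, le_of_forall_pos_le_add fun ε hε ↦ ?_⟩
  have hK : 0 < (r + 3) ^ 2 * (168 + 16 * u) := by positivity
  refine (entropy (div_pos hε hK)).2.2.trans ?_
  rw [mul_add, mul_div_cancel₀ _ hK.ne']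
  linarith

end IsGaussianUnimodal

section DistanceToInterval

variable {A B y : ℝ}

theorem sub_projIcc_mul_projIcc_sub_nonneg (hAB : A ≤ B) (x : ℝ) (hy : y ∈ Icc A B) :
    0 ≤ (x - projIcc A B hAB x) * (projIcc A B hAB x - y) := by
  rcases le_total x A with hA | hA
  · rw [projIcc_of_le_left hAB hA]
    exact mul_nonneg_of_nonpos_of_nonpos (sub_nonpos.2 hA) (sub_nonpos.2 hy.1)
  rcases le_total x B with hB | hB
  · simp [projIcc_of_mem hAB ⟨hA, hB⟩]
  · rw [projIcc_of_right_le hAB hB]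
    exact mul_nonneg (sub_nonneg.2 hB) (sub_nonneg.2 hy.2)

theorem sq_sub_projIcc_le (hAB : A ≤ B) (x : ℝ) (hy : y ∈ Icc A B) :
    (x - projIcc A B hAB x : ℝ) ^ 2 ≤ (x - y) ^ 2 := by
  linarith [sub_projIcc_mul_projIcc_sub_nonneg hAB x hy, sq_nonneg (projIcc A B hAB x - y : ℝ)]

theorem infDist_Icc (hAB : A ≤ B) (x : ℝ) :
    Metric.infDist x (Icc A B) = |x - projIcc A B hAB x| :=
  le_antisymm (Metric.infDist_le_dist_of_mem (projIcc A B hAB x).2)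
    ((Metric.le_infDist (nonempty_Icc.2 hAB)).2 fun _ hy ↦
      sq_le_sq.1 (sq_sub_projIcc_le hAB x hy))

theorem sq_infDist_Icc (hAB : A ≤ B) (x : ℝ) :
    Metric.infDist x (Icc A B) ^ 2 = (x - projIcc A B hAB x) ^ 2 := by
  rw [infDist_Icc hAB, sq_abs]

theorem hasDerivAt_sq_sub_projIcc (hAB : A ≤ B) (x : ℝ) :
    HasDerivAt (fun y ↦ (y - projIcc A B hAB y : ℝ) ^ 2) (2 * (x - projIcc A B hAB x)) x := by
  rw [hasDerivAt_iff_isLittleO]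
  refine (Asymptotics.IsBigO.of_bound 1 (.of_forall fun y ↦ ?_)).trans_isLittleO
    (Asymptotics.isLittleO_pow_sub_sub x one_lt_two)
  have angle_x := sub_projIcc_mul_projIcc_sub_nonneg hAB x (projIcc A B hAB y).2
  have closest_y := sq_sub_projIcc_le hAB y (projIcc A B hAB x).2
  rw [one_mul, norm_pow, norm_norm, norm_eq_abs, norm_eq_abs, sq_abs, smul_eq_mul, abs_of_nonneg]
  · linarith
  · linarith [sq_nonneg ((y - projIcc A B hAB y) - (x - projIcc A B hAB x) : ℝ)]

theorem integral_comp_sub_projIcc (hAB : A ≤ B) {ψ : ℝ → ℝ} (hψ : Integrable ψ) :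
    ∫ x, ψ (x - projIcc A B hAB x) = (B - A) * ψ 0 + ∫ x, ψ x := by
  have left_int : Integrable ((Iic 0).indicator ψ) := hψ.indicator measurableSet_Iic
  have right_int : Integrable ((Ioi 0).indicator ψ) := hψ.indicator measurableSet_Ioi
  have middle_int : Integrable ((Ioc A B).indicator fun _ ↦ ψ 0) :=
    (integrable_indicator_iff measurableSet_Ioc).2 (integrableOn_const measure_Ioc_lt_top.ne)
  have split (x : ℝ) : ψ (x - projIcc A B hAB x) = (Iic 0).indicator ψ (x - A) +
      (Ioc A B).indicator (fun _ ↦ ψ 0) x + (Ioi 0).indicator ψ (x - B) := by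
    rcases le_or_gt x A with hA | hA
    · simp [indicator, hA, hA.not_gt, (hA.trans hAB).not_gt, projIcc_of_le_left]
    rcases le_or_gt x B with hB | hB
    · simp [indicator, hA, hA.not_ge, hB, hB.not_gt, projIcc_of_mem hAB ⟨hA.le, hB⟩]
    · simp [indicator, hA.not_ge, hB, hB.not_ge, projIcc_of_right_le hAB hB.le]
  have sum_int : Integrable fun x ↦
      (Iic 0).indicator ψ (x - A) + (Ioc A B).indicator (fun _ ↦ ψ 0) x :=
    (left_int.comp_sub_right A).add middle_int
  simp_rw [split]
  rw [integral_add sum_int (right_int.comp_sub_right B),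
    integral_add (left_int.comp_sub_right A) middle_int,
    integral_sub_right_eq_self _ A, integral_sub_right_eq_self _ B,
    integral_indicator measurableSet_Iic, integral_indicator measurableSet_Ioc,
    integral_indicator measurableSet_Ioi, setIntegral_const, Real.volume_real_Ioc_of_le hAB,
    ← intervalIntegral.integral_Iic_add_Ioi hψ.integrableOn hψ.integrableOn, smul_eq_mul]
  ring

theorem dist_le_add_infDist {X : Type*} [PseudoMetricSpace X] {s : Set X} {c : X} {r : ℝ}
    (hs : s.Nonempty) (hsr : s ⊆ Metric.closedBall c r) (x : X) :
    dist x c ≤ r + Metric.infDist x s := by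
  rw [← sub_le_iff_le_add', Metric.le_infDist hs]
  intro y hy
  linarith [dist_triangle x y c, Metric.mem_closedBall.1 (hsr hy)]

end DistanceToInterval

/-- The density proportional to `exp (-d(x, [A, B])² / 2)`. It interpolates between the densities of
the statement: `gaussAt m` is the case `A = B = m`, and `smUnif m` is the case `A = -m`,
`B = 2m`. -/
noncomputable def smoothedUniform (A B x : ℝ) : ℝ :=
  exp (-Metric.infDist x (Icc A B) ^ 2 / 2) / (B - A + √(2 * π))

section SmoothedUniform

variable {A B c : ℝ}

theorem smoothedUniform_normalizer_pos (hAB : A ≤ B) : 0 < B - A + √(2 * π) :=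
  add_pos_of_nonneg_of_pos (sub_nonneg.2 hAB) (by positivity)

theorem integral_smoothedUniform (hAB : A ≤ B) : ∫ x, smoothedUniform A B x = 1 := by
  have hψ : (fun x : ℝ ↦ exp (-x ^ 2 / 2)) = fun x ↦ exp (-(1 / 2) * x ^ 2) := by
    ext x
    ring_nf
  have gaussian_int : Integrable fun x : ℝ ↦ exp (-x ^ 2 / 2) := by
    rw [hψ]
    exact integrable_exp_neg_mul_sq one_half_pos
  have gaussian_integral : ∫ x : ℝ, exp (-x ^ 2 / 2) = √(2 * π) := by
    rw [hψ, integral_gaussian]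
    ring_nf
  simp only [smoothedUniform, sq_infDist_Icc hAB]
  rw [integral_div, integral_comp_sub_projIcc hAB gaussian_int, gaussian_integral,
    div_eq_one_iff_eq (smoothedUniform_normalizer_pos hAB).ne']
  simp

theorem integrable_smoothedUniform (hAB : A ≤ B) : Integrable (smoothedUniform A B) :=
  .of_integral_ne_zero (by simp [integral_smoothedUniform hAB])

theorem hasDerivAt_smoothedUniform (hAB : A ≤ B) (x : ℝ) :
    HasDerivAt (smoothedUniform A B)
      (-(x - projIcc A B hAB x) * smoothedUniform A B x) x := by
  have eq_exp : smoothedUniform A B = fun y ↦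
      exp (-(y - projIcc A B hAB y) ^ 2 / 2) / (B - A + √(2 * π)) := by
    ext y
    rw [smoothedUniform, sq_infDist_Icc hAB]
  rw [eq_exp]
  refine ((((hasDerivAt_sq_sub_projIcc hAB x).fun_neg.div_const 2).exp).div_const
    _).congr_deriv ?_
  ring

theorem isGaussianUnimodal_smoothedUniform (hc : c ∈ Icc A B) :
    IsGaussianUnimodal (smoothedUniform A B) c fun x ↦ Metric.infDist x (Icc A B) := by
  have hAB : A ≤ B := hc.1.trans hc.2
  have nonneg (x : ℝ) : 0 ≤ smoothedUniform A B x :=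
    div_nonneg (exp_nonneg _) (smoothedUniform_normalizer_pos hAB).le
  refine ⟨fun x ↦ (hasDerivAt_smoothedUniform hAB x).differentiableAt, nonneg, fun x ↦ ?_⟩
  rw [(hasDerivAt_smoothedUniform hAB x).deriv, sq_infDist_Icc hAB]
  linarith [mul_nonneg (sub_projIcc_mul_projIcc_sub_nonneg hAB x hc) (nonneg x)]

end SmoothedUniform

section Target

variable {m a : ℝ}

theorem gaussAt_eq_smoothedUniform (m : ℝ) : gaussAt m = smoothedUniform m m := by
  ext x
  simp [gaussAt, smoothedUniform, Real.dist_eq]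

theorem smUnif_eq_smoothedUniform (m : ℝ) : smUnif m = smoothedUniform (-m) (2 * m) := by
  ext x
  rw [smUnif, smoothedUniform, show 2 * m - -m = 3 * m by ring]

theorem piDensA_eq_smoothedUniform (m a : ℝ) :
    piDensA m a = fun x ↦ (1 - exp (-(a ^ 2 * m ^ 2) / 2)) * smoothedUniform m m x +
      exp (-(a ^ 2 * m ^ 2) / 2) * smoothedUniform (-m) (2 * m) x := by
  ext x
  rw [piDensA, gaussAt_eq_smoothedUniform, smUnif_eq_smoothedUniform]

theorem gaussAt_weight_nonneg (m a : ℝ) : 0 ≤ 1 - exp (-(a ^ 2 * m ^ 2) / 2) :=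
  sub_nonneg.2 (exp_le_one_iff.2 (by linarith [mul_nonneg (sq_nonneg a) (sq_nonneg m)]))

theorem integral_piDensA (hm : 0 ≤ m) : ∫ x, piDensA m a x = 1 := by
  have hle : -m ≤ 2 * m := by linarith
  rw [piDensA_eq_smoothedUniform, integral_add ((integrable_smoothedUniform le_rfl).const_mul _)
    ((integrable_smoothedUniform hle).const_mul _), integral_const_mul, integral_const_mul,
    integral_smoothedUniform le_rfl, integral_smoothedUniform hle]
  ring

theorem isGaussianUnimodal_piDensA (hm : 0 ≤ m) :
    IsGaussianUnimodal (piDensA m a) m fun x ↦ Metric.infDist x (Icc (-m) (2 * m)) := by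
  have hmem : m ∈ Icc (-m) (2 * m) := ⟨by linarith, by linarith⟩
  have hsubset : Icc m m ⊆ Icc (-m) (2 * m) := by simpa using hmem
  rw [piDensA_eq_smoothedUniform]
  refine .add (.const_mul ?_ (gaussAt_weight_nonneg m a))
    ((isGaussianUnimodal_smoothedUniform hmem).const_mul (exp_nonneg _))
  exact (isGaussianUnimodal_smoothedUniform (left_mem_Icc.2 le_rfl)).mono fun x ↦
    pow_le_pow_left₀ Metric.infDist_nonneg
      (Metric.infDist_le_infDist_of_subset hsubset (nonempty_Icc.2 le_rfl)) 2

theorem exp_neg_sq_infDist_le_piDensA (hm : 0 ≤ m) (x : ℝ) :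
    exp (-Metric.infDist x (Icc (-m) (2 * m)) ^ 2 / 2) ≤
      (2 * m + 3) * exp (a ^ 2 * m ^ 2 / 2 + 1) * piDensA m a x := by
  have sqrt_le : √(2 * π) ≤ 3 := sqrt_le_iff.2 ⟨by norm_num, by linarith [pi_lt_d2]⟩
  have normalizer_le : 3 * m + √(2 * π) ≤ (2 * m + 3) * exp 1 := by
    nlinarith [exp_one_gt_d9]
  have smUnif_le : exp (-(a ^ 2 * m ^ 2) / 2) * smUnif m x ≤ piDensA m a x :=
    le_add_of_nonneg_left (mul_nonneg (gaussAt_weight_nonneg m a) (by rw [gaussAt]; positivity))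
  have exp_split : exp 1 = exp (a ^ 2 * m ^ 2 / 2 + 1) * exp (-(a ^ 2 * m ^ 2) / 2) := by
    rw [← exp_add]
    ring_nf
  calc exp (-Metric.infDist x (Icc (-m) (2 * m)) ^ 2 / 2)
      = (3 * m + √(2 * π)) * smUnif m x := by
        rw [smUnif]
        field_simp
    _ ≤ (2 * m + 3) * exp 1 * smUnif m x := by
        refine mul_le_mul_of_nonneg_right normalizer_le ?_
        rw [smUnif]
        positivity
    _ = (2 * m + 3) * exp (a ^ 2 * m ^ 2 / 2 + 1) * (exp (-(a ^ 2 * m ^ 2) / 2) * smUnif m x) := by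
        rw [exp_split]
        ring
    _ ≤ _ := by gcongr

theorem logSobolevConstant_le (hm : 10 ≤ m) (ha : √(2 * log 2) / m < a) :
    (2 * m + 3) ^ 2 * (92 + 4 * a ^ 2 * m ^ 2) ≤
      81 * a ^ 2 * m ^ 5 / (1 - 2 * exp (-(a ^ 2 * m ^ 2) / 2)) := by
  have hm_pos : 0 < m := by linarith
  have two_log_two_lt : 2 * log 2 < a ^ 2 * m ^ 2 := by
    rw [← mul_pow]
    exact (sqrt_lt' (lt_of_le_of_lt (sqrt_nonneg _) ((div_lt_iff₀ hm_pos).1 ha))).1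
      ((div_lt_iff₀ hm_pos).1 ha)
  have exp_lt : exp (-(a ^ 2 * m ^ 2) / 2) < 1 / 2 := by
    rw [← lt_log_iff_exp_lt one_half_pos, log_div one_ne_zero two_ne_zero, log_one]
    linarith
  rw [le_div_iff₀ (by linarith)]
  calc (2 * m + 3) ^ 2 * (92 + 4 * a ^ 2 * m ^ 2) * (1 - 2 * exp (-(a ^ 2 * m ^ 2) / 2))
      ≤ (2 * m + 3) ^ 2 * (92 + 4 * a ^ 2 * m ^ 2) :=
        mul_le_of_le_one_right (by positivity) (by linarith [exp_pos (-(a ^ 2 * m ^ 2) / 2)])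
    _ ≤ (2.3 * m) ^ 2 * (92 + 4 * a ^ 2 * m ^ 2) := by gcongr; linarith
    _ = m ^ 2 * (2.3 ^ 2 * (92 + 4 * a ^ 2 * m ^ 2)) := by ring
    _ ≤ m ^ 2 * (810 * (a ^ 2 * m ^ 2)) :=
        mul_le_mul_of_nonneg_left (by linarith [log_two_gt_d9]) (sq_nonneg m)
    _ ≤ m ^ 2 * (81 * m * (a ^ 2 * m ^ 2)) := by gcongr; linarith
    _ = 81 * a ^ 2 * m ^ 5 := by ring

theorem general_unimodal_target_log_sobolev_general (m a : ℝ) (hm : 0 ≤ m) :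
    SatisfiesLogSobolev (piDensA m a) ((2 * m + 3) ^ 2 * (92 + 4 * a ^ 2 * m ^ 2)) := by
  have hcδ (x : ℝ) : |x - m| ≤ 2 * m + Metric.infDist x (Icc (-m) (2 * m)) :=
    dist_le_add_infDist (nonempty_Icc.2 (by linarith))
      (by rw [Real.closedBall_eq_Icc]; exact Icc_subset_Icc (by linarith) (by linarith)) x
  have h := (isGaussianUnimodal_piDensA hm).satisfiesLogSobolev
    (Metric.continuous_infDist_pt _) (by positivity) hcδ (by positivity)
    (exp_neg_sq_infDist_le_piDensA hm) (integral_piDensA (a := a) hm)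
  convert h using 1
  ring

end Target

/-- For m ≥ 10 and a ∈ (√(2 log 2)/m, 1], the target
π = (1−e^{−a²m²/2})N(m,1) + e^{−a²m²/2}u_m satisfies a log-Sobolev inequality with
constant 81a²m⁵/(1 − 2e^{−a²m²/2}). -/
theorem general_unimodal_target_log_sobolev
    (m a : ℝ) (hm : 10 ≤ m)
    (ha : a ∈ Set.Ioc (Real.sqrt (2 * Real.log 2) / m) 1) :
    ∀ f : ℝ → ℝ, ContDiff ℝ (⊤ : ℕ∞) f → HasCompactSupport f →
      (∫ x, (f x) ^ 2 * Real.log ((f x) ^ 2 / ∫ y, (f y) ^ 2 * piDensA m a y)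
          * piDensA m a x)
        ≤ 2 * (81 * a ^ 2 * m ^ 5 / (1 - 2 * Real.exp (-(a ^ 2 * m ^ 2) / 2)))
            * ∫ x, (deriv f x) ^ 2 * piDensA m a x := by
  intro f hf hf_supp
  have hp := isGaussianUnimodal_piDensA (a := a) (by linarith : 0 ≤ m)
  have hLS := (general_unimodal_target_log_sobolev_general m a (by linarith)).mono hp.nonneg
    (logSobolevConstant_le hm ha.1)
  exact hLS.entropy_le_of_hasCompactSupport hp.differentiable.continuous (hf.of_le (by simp))
    hf_supp
end

section
/- Let m ≥ 10, let g_m(x) = (2π)^{−1/2} e^{−(x−m)²/2} be the density of N(m,1), and let u_m(x) = e^{−d(x,[−m,2m])²/2} / (3m + √(2π)). Then the chi-squared divergence of N(m,1) from u_m satisfies χ²(N(m,1), u_m) + 1 = ∫_ℝ g_m(x)² / u_m(x) dx ≤ 5m. -/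
open MeasureTheory Real

/-!
For every center `c ∈ [-m, 2m]` we have `d(x, [-m, 2m]) ≤ |x - c|`, so `g_c` is dominated pointwise
by `u_m` up to the ratio `K = (3m + √(2π)) / √(2π) = 1 + 3m / √(2π)` of the normalizing constants.
Then `g_c² / u_m ≤ K g_c`, and `g_c` has integral one.
-/

section SqDiv

lemma sq_div_le_mul_of_le_mul {𝕜 : Type*} [Field 𝕜] [LinearOrder 𝕜] [IsStrictOrderedRing 𝕜]
    {a b K : 𝕜} (ha : 0 ≤ a) (hb : 0 ≤ b) (hab : a ≤ K * b) : a ^ 2 / b ≤ K * a := by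
  rcases hb.eq_or_lt with rfl | hb
  · obtain rfl : a = 0 := le_antisymm (by simpa using hab) ha
    simp
  · rw [div_le_iff₀ hb]
    calc a ^ 2 = a * a := sq a
      _ ≤ a * (K * b) := by gcongr
      _ = K * a * b := by ring

variable {α : Type*} [MeasurableSpace α] {μ : Measure α} {f g : α → ℝ} {K : ℝ}

lemma integrable_sq_div_of_le_mul (hf : Integrable f μ) (hg : AEStronglyMeasurable g μ)
    (hf0 : 0 ≤ᵐ[μ] f) (hg0 : 0 ≤ᵐ[μ] g) (hfg : ∀ᵐ x ∂μ, f x ≤ K * g x) :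
    Integrable (fun x ↦ f x ^ 2 / g x) μ := by
  refine (hf.const_mul K).mono' ((hf.aestronglyMeasurable.pow 2).div₀ hg) ?_
  filter_upwards [hf0, hg0, hfg] with x hfx hgx hle
  rw [Real.norm_of_nonneg (div_nonneg (sq_nonneg _) hgx)]
  exact sq_div_le_mul_of_le_mul hfx hgx hle

lemma integral_sq_div_le_of_le_mul (hf : Integrable f μ)
    (hf0 : 0 ≤ᵐ[μ] f) (hg0 : 0 ≤ᵐ[μ] g) (hfg : ∀ᵐ x ∂μ, f x ≤ K * g x) :
    ∫ x, f x ^ 2 / g x ∂μ ≤ K * ∫ x, f x ∂μ := by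
  rw [← integral_const_mul]
  refine integral_mono_of_nonneg ?_ (hf.const_mul K) ?_
  · filter_upwards [hg0] with x hgx using div_nonneg (sq_nonneg _) hgx
  · filter_upwards [hf0, hg0, hfg] with x hfx hgx hle using sq_div_le_mul_of_le_mul hfx hgx hle

end SqDiv

lemma exp_neg_dist_sq_le_exp_neg_infDist_sq {α : Type*} [PseudoMetricSpace α] {s : Set α} {y : α}
    (hy : y ∈ s) (x : α) :
    exp (-dist x y ^ 2 / 2) ≤ exp (-Metric.infDist x s ^ 2 / 2) := by
  have hdist : Metric.infDist x s ≤ dist x y := Metric.infDist_le_dist_of_mem hy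
  have hnonneg : 0 ≤ Metric.infDist x s := Metric.infDist_nonneg
  gcongr

lemma gaussAt_eq_gaussianPDFReal (c : ℝ) : gaussAt c = ProbabilityTheory.gaussianPDFReal c 1 := by
  ext x
  simp [gaussAt, ProbabilityTheory.gaussianPDFReal, div_eq_inv_mul]

lemma gaussAt_nonneg (c x : ℝ) : 0 ≤ gaussAt c x := by
  unfold gaussAt
  positivity

lemma integrable_gaussAt (c : ℝ) : Integrable (gaussAt c) := by
  rw [gaussAt_eq_gaussianPDFReal]
  exact ProbabilityTheory.integrable_gaussianPDFReal c 1

lemma integral_gaussAt (c : ℝ) : ∫ x, gaussAt c x = 1 := by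
  rw [gaussAt_eq_gaussianPDFReal]
  exact ProbabilityTheory.integral_gaussianPDFReal_eq_one c one_ne_zero

lemma smUnif_nonneg {m : ℝ} (hm : 0 ≤ m) (x : ℝ) : 0 ≤ smUnif m x := by
  unfold smUnif
  positivity

lemma continuous_smUnif (m : ℝ) : Continuous (smUnif m) := by
  unfold smUnif
  fun_prop

lemma gaussAt_le_mul_smUnif {m c : ℝ} (hc : c ∈ Set.Icc (-m) (2 * m)) (x : ℝ) :
    gaussAt c x ≤ (1 + 3 * m / √(2 * π)) * smUnif m x := by
  have hm : 0 ≤ m := by linarith [hc.1, hc.2]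
  calc gaussAt c x = exp (-dist x c ^ 2 / 2) / √(2 * π) := by
        rw [gaussAt, Real.dist_eq, sq_abs]
    _ ≤ exp (-Metric.infDist x (Set.Icc (-m) (2 * m)) ^ 2 / 2) / √(2 * π) := by
        gcongr ?_ / _
        exact exp_neg_dist_sq_le_exp_neg_infDist_sq hc x
    _ = (1 + 3 * m / √(2 * π)) * smUnif m x := by
        rw [smUnif]
        field_simp
        ring

theorem chi_squared_gaussian_smoothed_uniform_le_general {m c : ℝ}
    (hc : c ∈ Set.Icc (-m) (2 * m)) :
    Integrable (fun x ↦ gaussAt c x ^ 2 / smUnif m x) ∧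
      ∫ x, gaussAt c x ^ 2 / smUnif m x ≤ 1 + 3 * m / √(2 * π) := by
  have hm : 0 ≤ m := by linarith [hc.1, hc.2]
  have hg0 : 0 ≤ᵐ[volume] gaussAt c := ae_of_all _ (gaussAt_nonneg c)
  have hu0 : 0 ≤ᵐ[volume] smUnif m := ae_of_all _ (smUnif_nonneg hm)
  have hgu : ∀ᵐ x, gaussAt c x ≤ (1 + 3 * m / √(2 * π)) * smUnif m x :=
    ae_of_all _ (gaussAt_le_mul_smUnif hc)
  refine ⟨integrable_sq_div_of_le_mul (integrable_gaussAt c)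
    (continuous_smUnif m).aestronglyMeasurable hg0 hu0 hgu, ?_⟩
  simpa only [integral_gaussAt, mul_one] using
    integral_sq_div_le_of_le_mul (integrable_gaussAt c) hg0 hu0 hgu

lemma one_add_three_mul_div_sqrt_two_pi_le {m : ℝ} (hm : 1 / 2 ≤ m) :
    1 + 3 * m / √(2 * π) ≤ 5 * m := by
  have hsqrt : 1 ≤ √(2 * π) := Real.one_le_sqrt.mpr (by linarith [pi_gt_three])
  have hdiv : 3 * m / √(2 * π) ≤ 3 * m := div_le_self (by linarith) hsqrt
  linarith

/-- For m ≥ 10, the chi-squared divergence of N(m,1) from u_m satisfies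
χ²(N(m,1), u_m) + 1 = ∫ g_m²/u_m ≤ 5m. -/
theorem chi_squared_gaussian_smoothed_uniform_le
    (m : ℝ) (hm : 10 ≤ m) :
    (∫ x, (gaussAt m x) ^ 2 / smUnif m x) ≤ 5 * m := by
  have hmem : m ∈ Set.Icc (-m) (2 * m) := ⟨by linarith, by linarith⟩
  exact (chi_squared_gaussian_smoothed_uniform_le_general hmem).2.trans
    (one_add_three_mul_div_sqrt_two_pi_le (by linarith))
end
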